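/- Let δ > 0 and k ≥ 2, and let {(S_i,G_i)}_{i≥1} be a sequence of systems of configurations of degree k with β_i := |G_i|^k/|S_i^{(k)}| → ∞ as i → ∞. Then there exists a sequence f_i → ∞ (one may take f_i = ((1−δ)·log(β_i)/2)^{1/(2k)}) such that for every sequence p(i) ∈ [0,1] with p(i) ≤ f_i·|S_i^{(k)}|^{−1/k} for all i, P_{p(i)}({A ⊆ G_i : A is (δ,S_i)_k-stable}) → 0 as i → ∞. -/

import Mathlib

open Finset Filter Topology

attribute [local instance] Classical.propDecidable

/-- The set `S^{(k)}` of tuples of `S` with pairwise distinct entries. -/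
noncomputable def distinctPart {k : ℕ} {G : Type} (S : Finset (Fin k → G)) :
    Finset (Fin k → G) :=
  S.filter fun x => Function.Injective x

/-- Probability assigned to a family `E` of subsets of `G` by the binomial random subset
`[G]_p`. -/
noncomputable def binomProb {G : Type} [Fintype G] (p : ℝ) (E : Finset (Finset G)) : ℝ :=
  ∑ A ∈ E, p ^ A.card * (1 - p) ^ (Fintype.card G - A.card)

/-- `X` is `(δ,S)_k`-stable. -/
def StableK {k : ℕ} {G : Type} (δ : ℝ) (S : Finset (Fin k → G)) (X : Finset G) : Prop :=
  ∀ X' ⊆ X, δ * (X.card : ℝ) ≤ (X'.card : ℝ) →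
    (∃ x ∈ S, ∀ j, x j ∈ X') ∧ (∃ x ∈ distinctPart S, ∀ j, x j ∈ X')

lemma aux_superset {G : Type} [Fintype G] (p : ℝ) (T : Finset G) :
    ∑ A : Finset G, (if T ⊆ A then p ^ A.card * (1 - p) ^ (Fintype.card G - A.card) else 0)
      = p ^ T.card := by
  rw [← Finset.sum_filter]
  have h : ∑ A ∈ Finset.univ.filter (fun A : Finset G => T ⊆ A),
      p ^ A.card * (1 - p) ^ (Fintype.card G - A.card)
      = ∑ B ∈ (Tᶜ).powerset, p ^ T.card * (p ^ B.card * (1 - p) ^ ((Tᶜ).card - B.card)) := by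
    refine Finset.sum_nbij' (fun A => A \ T) (fun B => T ∪ B) ?_ ?_ ?_ ?_ ?_
    · intro A _
      simp only [Finset.mem_powerset]
      intro x hx
      simp at hx ⊢
      exact hx.2
    · intro B _
      simp
    · intro A hA
      simp at hA
      exact Finset.union_sdiff_of_subset hA
    · intro B hB
      simp only [Finset.mem_powerset] at hB
      ext x
      have := @hB x
      simp at this ⊢
      tauto
    · intro A hA
      simp at hA
      have h1 : (A \ T).card + T.card = A.card := Finset.card_sdiff_add_card_eq_card hA
      have h2 : (Tᶜ).card = Fintype.card G - T.card := Finset.card_compl T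
      rw [h2, ← mul_assoc, ← pow_add]
      congr 2 <;> omega
  rw [h, ← Finset.mul_sum, Finset.sum_pow_mul_eq_add_pow]
  simp

lemma aux_total {G : Type} [Fintype G] (p : ℝ) :
    ∑ A : Finset G, p ^ A.card * (1 - p) ^ (Fintype.card G - A.card) = 1 := by
  simpa using aux_superset p (∅ : Finset G)

lemma aux_mean {G : Type} [Fintype G] (p : ℝ) :
    ∑ A : Finset G, p ^ A.card * (1 - p) ^ (Fintype.card G - A.card) * (A.card : ℝ)
      = Fintype.card G * p := by
  have h : ∀ A : Finset G, p ^ A.card * (1 - p) ^ (Fintype.card G - A.card) * (A.card : ℝ)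
      = ∑ g : G, (if ({g} : Finset G) ⊆ A then
        p ^ A.card * (1 - p) ^ (Fintype.card G - A.card) else 0) := by
    intro A
    simp [mul_comm]
  simp_rw [h]
  rw [Finset.sum_comm]
  simp_rw [aux_superset]
  simp

lemma aux_sq {G : Type} [Fintype G] (p : ℝ) :
    ∑ A : Finset G, p ^ A.card * (1 - p) ^ (Fintype.card G - A.card) * (A.card : ℝ) ^ 2
      = Fintype.card G * (p + (Fintype.card G - 1) * p ^ 2) := by
  have h : ∀ A : Finset G, p ^ A.card * (1 - p) ^ (Fintype.card G - A.card) * (A.card : ℝ) ^ 2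
      = ∑ g : G, ∑ h : G, (if ({g, h} : Finset G) ⊆ A then
        p ^ A.card * (1 - p) ^ (Fintype.card G - A.card) else 0) := by
    intro A
    have : ∀ g h : G, (if ({g, h} : Finset G) ⊆ A then
        p ^ A.card * (1 - p) ^ (Fintype.card G - A.card) else 0)
        = p ^ A.card * (1 - p) ^ (Fintype.card G - A.card) *
          ((if g ∈ A then 1 else 0) * (if h ∈ A then 1 else 0)) := by
      intro g h
      by_cases h1 : g ∈ A <;> by_cases h2 : h ∈ A <;> simp [Finset.insert_subset_iff, h1, h2]
    simp_rw [this, ← Finset.mul_sum, ← Finset.sum_mul]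
    simp [sq]
  simp_rw [h]
  rw [Finset.sum_comm]
  have h2 : ∀ g : G, ∑ A : Finset G, ∑ h : G, (if ({g, h} : Finset G) ⊆ A then
        p ^ A.card * (1 - p) ^ (Fintype.card G - A.card) else 0)
        = p + (Fintype.card G - 1) * p ^ 2 := by
    intro g
    rw [Finset.sum_comm]
    simp_rw [aux_superset]
    have : ∀ h : G, p ^ ({g, h} : Finset G).card = p ^ 2 + (if g = h then p - p ^ 2 else 0) := by
      intro h
      by_cases hgh : g = h
      · simp [hgh]
      · simp [hgh, Finset.card_pair hgh]
    simp_rw [this]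
    rw [Finset.sum_add_distrib]
    simp
    ring
  simp_rw [h2]
  simp
  ring

lemma aux_var {G : Type} [Fintype G] (p : ℝ) :
    ∑ A : Finset G, p ^ A.card * (1 - p) ^ (Fintype.card G - A.card) *
        ((A.card : ℝ) - Fintype.card G * p) ^ 2
      = Fintype.card G * p * (1 - p) := by
  have h : ∀ A : Finset G, p ^ A.card * (1 - p) ^ (Fintype.card G - A.card) *
        ((A.card : ℝ) - Fintype.card G * p) ^ 2
      = p ^ A.card * (1 - p) ^ (Fintype.card G - A.card) * (A.card : ℝ) ^ 2
       - 2 * (Fintype.card G * p) *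
          (p ^ A.card * (1 - p) ^ (Fintype.card G - A.card) * (A.card : ℝ))
       + (Fintype.card G * p) ^ 2 * (p ^ A.card * (1 - p) ^ (Fintype.card G - A.card)) := by
    intro A; ring
  simp_rw [h]
  rw [Finset.sum_add_distrib, Finset.sum_sub_distrib, ← Finset.mul_sum, ← Finset.mul_sum,
    aux_sq, aux_mean, aux_total]
  ring

/-- number of distinct configurations inside `A` -/
noncomputable def cnt {k : ℕ} {G : Type} (S : Finset (Fin k → G)) (A : Finset G) : ℕ :=
  ((distinctPart S).filter (fun x => ∀ j, x j ∈ A)).card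

lemma aux_cnt {k : ℕ} {G : Type} [Fintype G] (S : Finset (Fin k → G)) (p : ℝ) :
    ∑ A : Finset G, p ^ A.card * (1 - p) ^ (Fintype.card G - A.card) * (cnt S A : ℝ)
      = (distinctPart S).card * p ^ k := by
  have h : ∀ A : Finset G, p ^ A.card * (1 - p) ^ (Fintype.card G - A.card) * (cnt S A : ℝ)
      = ∑ x ∈ distinctPart S, (if Finset.univ.image x ⊆ A then
        p ^ A.card * (1 - p) ^ (Fintype.card G - A.card) else 0) := by
    intro A
    rw [← Finset.sum_filter]
    simp [cnt, Finset.image_subset_iff, mul_comm]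
  simp_rw [h]
  rw [Finset.sum_comm]
  simp_rw [aux_superset]
  rw [Finset.sum_congr rfl (g := fun _ => p ^ k)]
  · simp
  · intro x hx
    have hinj : Function.Injective x := by
      simp only [distinctPart, Finset.mem_filter] at hx
      exact hx.2
    rw [Finset.card_image_of_injective _ hinj]
    simp

lemma stable_cnt {k : ℕ} (hk : 2 ≤ k) {G : Type} (δ : ℝ) (S : Finset (Fin k → G))
    (A : Finset G) (h : StableK δ S A) : (1 - δ) * (A.card : ℝ) < cnt S A := by
  by_contra hc
  push Not at hc
  set I := ((distinctPart S).filter (fun x => ∀ j, x j ∈ A)).image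
    (fun x => x ⟨0, by omega⟩) with hI
  have hIc : I.card ≤ cnt S A := Finset.card_image_le
  have h1 : A.card ≤ (A \ I).card + I.card := by
    have := Finset.le_card_sdiff I A
    omega
  have h1' : (A.card : ℝ) ≤ (A \ I).card + cnt S A := by exact_mod_cast h1.trans (by omega)
  obtain ⟨-, x, hx, hxA⟩ := h (A \ I) Finset.sdiff_subset (by linarith)
  have h0 := (Finset.mem_sdiff.1 (hxA ⟨0, by omega⟩)).2
  apply h0
  rw [hI, Finset.mem_image]
  exact ⟨x, Finset.mem_filter.2 ⟨hx, fun j => (Finset.mem_sdiff.1 (hxA j)).1⟩, rfl⟩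

lemma binom_le {G : Type} [Fintype G] (p : ℝ) (hp0 : 0 ≤ p) (hp1 : p ≤ 1)
    (P : Finset G → Prop) (F : Finset G → ℝ) (hF : ∀ A, 0 ≤ F A) (hPF : ∀ A, P A → 1 ≤ F A) :
    binomProb p (Finset.univ.filter (fun A : Finset G => P A)) ≤
      ∑ A : Finset G, p ^ A.card * (1 - p) ^ (Fintype.card G - A.card) * F A := by
  unfold binomProb
  rw [Finset.sum_filter]
  apply Finset.sum_le_sum
  intro A _
  have hw : 0 ≤ p ^ A.card * (1 - p) ^ (Fintype.card G - A.card) :=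
    mul_nonneg (pow_nonneg hp0 _) (pow_nonneg (by linarith) _)
  split_ifs with h
  · nlinarith [hPF A h]
  · exact mul_nonneg hw (hF A)

lemma binom_nonneg {G : Type} [Fintype G] (p : ℝ) (hp0 : 0 ≤ p) (hp1 : p ≤ 1)
    (E : Finset (Finset G)) : 0 ≤ binomProb p E :=
  Finset.sum_nonneg fun A _ => mul_nonneg (pow_nonneg hp0 _) (pow_nonneg (by linarith) _)

lemma bound1 {k : ℕ} (hk : 2 ≤ k) {G : Type} [Fintype G] (δ : ℝ) (hδ : δ < 1)
    (S : Finset (Fin k → G)) (p : ℝ) (hp0 : 0 ≤ p) (hp1 : p ≤ 1) :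
    binomProb p (Finset.univ.filter (fun A : Finset G => StableK δ S A)) ≤
      (distinctPart S).card * p ^ k := by
  rw [← aux_cnt]
  refine binom_le p hp0 hp1 _ _ (fun A => Nat.cast_nonneg _) (fun A hA => ?_)
  have h := stable_cnt hk δ S A hA
  have h2 : (0 : ℝ) < cnt S A :=
    lt_of_le_of_lt (mul_nonneg (by linarith) (Nat.cast_nonneg _)) h
  have h3 : 0 < cnt S A := by exact_mod_cast h2
  exact_mod_cast h3

lemma bound2 {k : ℕ} (hk : 2 ≤ k) {G : Type} [Fintype G] (δ : ℝ) (hδ : δ < 1)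
    (S : Finset (Fin k → G)) (p : ℝ) (hp0 : 0 ≤ p) (hp1 : p ≤ 1)
    (hn : 0 < Fintype.card G * p) :
    binomProb p (Finset.univ.filter (fun A : Finset G => StableK δ S A)) ≤
      4 / (Fintype.card G * p) +
        2 / (1 - δ) * ((distinctPart S).card * p ^ k) / (Fintype.card G * p) := by
  set N : ℝ := Fintype.card G * p with hN
  have hδ' : 0 < 1 - δ := by linarith
  have h := binom_le p hp0 hp1 (fun A => StableK δ S A)
    (fun A => 4 / N ^ 2 * ((A.card : ℝ) - N) ^ 2 + 2 / (1 - δ) / N * cnt S A)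
    (fun A => by positivity) (fun A hA => ?_)
  · refine h.trans ?_
    have e : ∀ A : Finset G, p ^ A.card * (1 - p) ^ (Fintype.card G - A.card) *
        (4 / N ^ 2 * ((A.card : ℝ) - N) ^ 2 + 2 / (1 - δ) / N * cnt S A)
        = 4 / N ^ 2 * (p ^ A.card * (1 - p) ^ (Fintype.card G - A.card) * ((A.card : ℝ) - N) ^ 2)
        + 2 / (1 - δ) / N *
          (p ^ A.card * (1 - p) ^ (Fintype.card G - A.card) * cnt S A) := by
      intro A; ring
    simp_rw [e]
    rw [Finset.sum_add_distrib, ← Finset.mul_sum, ← Finset.mul_sum, aux_cnt, hN, aux_var, ← hN]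
    have e1 : 4 / N ^ 2 * (N * (1 - p)) = 4 / N * (1 - p) := by field_simp
    have e2 : 2 / (1 - δ) / N * ((distinctPart S).card * p ^ k)
      = 2 / (1 - δ) * ((distinctPart S).card * p ^ k) / N := by ring
    rw [e1, e2]
    have : 0 < 4 / N := by positivity
    nlinarith
  · have hs := stable_cnt hk δ S A hA
    by_cases hc : (A.card : ℝ) ≤ N / 2
    · have h1 : 1 ≤ 4 / N ^ 2 * ((A.card : ℝ) - N) ^ 2 := by
        rw [div_mul_eq_mul_div, le_div_iff₀ (by positivity)]
        nlinarith
      have h2 : 0 ≤ 2 / (1 - δ) / N * (cnt S A : ℝ) := by positivity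
      linarith
    · push Not at hc
      have h1 : 1 ≤ 2 / (1 - δ) / N * (cnt S A : ℝ) := by
        rw [div_div, div_mul_eq_mul_div, le_div_iff₀ (by positivity)]
        nlinarith
      have h2 : 0 ≤ 4 / N ^ 2 * ((A.card : ℝ) - N) ^ 2 := by positivity
      linarith

/-- Quantitative form: with `t = β^(1/(2k^2)) ≥ 1` and `p ≤ t * m^(-1/k)`. -/
lemma quant {k : ℕ} (hk : 2 ≤ k) {G : Type} [Fintype G] (δ : ℝ) (hδ : δ < 1)
    (S : Finset (Fin k → G)) (p : ℝ) (hp0 : 0 ≤ p) (hp1 : p ≤ 1) (t r : ℝ) (ht : 1 ≤ t)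
    (hr : 0 < r) (hrm : r ^ k = (distinctPart S).card) (hn : (Fintype.card G : ℝ) = t ^ (2 * k) * r)
    (hpr : p * r ≤ t) :
    binomProb p (Finset.univ.filter (fun A : Finset G => StableK δ S A)) ≤
      (4 + 2 / (1 - δ)) / t := by
  have ht0 : 0 < t := by linarith
  have hδ' : 0 < 1 - δ := by linarith
  have hc : 0 < 2 / (1 - δ) := by positivity
  have hm : (distinctPart S).card * p ^ k = (p * r) ^ k := by rw [← hrm]; ring
  by_cases hcase : p * r * t ^ k ≤ 1
  · refine (bound1 hk δ hδ S p hp0 hp1).trans ?_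
    rw [hm, le_div_iff₀ ht0]
    have h1 : t ≤ t ^ k := le_self_pow₀ ht (by omega)
    have hpr0 : 0 ≤ p * r := by positivity
    have h2 : p * r * t ≤ 1 := by nlinarith
    have h3 : p * r ≤ 1 := by nlinarith
    have h4 : (p * r) ^ k ≤ p * r := pow_le_of_le_one hpr0 h3 (by omega)
    nlinarith
  · push Not at hcase
    have hq : 0 < p * r := by
      by_contra h
      have : p * r * t ^ k ≤ 0 := mul_nonpos_of_nonpos_of_nonneg (by linarith) (by positivity)
      linarith
    have hN : (Fintype.card G : ℝ) * p = t ^ (2 * k) * (p * r) := by rw [hn]; ring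
    have hNpos : 0 < (Fintype.card G : ℝ) * p := by rw [hN]; positivity
    refine (bound2 hk δ hδ S p hp0 hp1 hNpos).trans ?_
    rw [hm, hN, add_div]
    have htk : t ≤ t ^ k := le_self_pow₀ ht (by omega)
    have hsplit : t ^ (2 * k) = t ^ k * t ^ k := by rw [two_mul, pow_add]
    have hA : t ≤ t ^ (2 * k) * (p * r) := by
      rw [hsplit]
      nlinarith [pow_pos ht0 k]
    apply add_le_add
    · exact div_le_div_of_nonneg_left (by norm_num) ht0 hA
    · rw [mul_div_assoc, div_eq_mul_one_div (2 / (1 - δ)) t]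
      apply mul_le_mul_of_nonneg_left _ hc.le
      rw [div_le_div_iff₀ (by positivity) ht0]
      obtain ⟨l, rfl⟩ : ∃ l, k = l + 1 := ⟨k - 1, by omega⟩
      have h1 : (p * r) ^ l ≤ t ^ l := pow_le_pow_left₀ hq.le hpr l
      have h2 : (p * r) ^ l * t ≤ t ^ (2 * (l + 1)) := by
        calc (p * r) ^ l * t ≤ t ^ l * t := by gcongr
          _ = t ^ (l + 1) := by ring
          _ ≤ _ := pow_le_pow_right₀ ht (by omega)
      calc (p * r) ^ (l + 1) * t = ((p * r) ^ l * t) * (p * r) := by ring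
        _ ≤ t ^ (2 * (l + 1)) * (p * r) := by gcongr
        _ = _ := by ring

/-- The substantive case `δ < 1`, with a nonnegative threshold sequence `f`. -/
lemma main_lt_one (k : ℕ) (hk : 2 ≤ k) (δ : ℝ) (hδ : δ < 1)
    (G : ℕ → Type) [∀ i, Fintype (G i)]
    (S : ∀ i, Finset (Fin k → G i))
    (hβ : Tendsto
      (fun i => (Fintype.card (G i) : ℝ) ^ k / ((distinctPart (S i)).card : ℝ))
      atTop atTop) :
    ∃ f : ℕ → ℝ, (∀ i, 0 ≤ f i) ∧ Tendsto f atTop atTop ∧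
      ∀ p : ℕ → ℝ, (∀ i, 0 ≤ p i ∧ p i ≤ 1) →
        (∀ i, p i ≤ f i * ((distinctPart (S i)).card : ℝ) ^ (-(1:ℝ)/(k:ℝ))) →
        Tendsto (fun i => binomProb (p i)
            (Finset.univ.filter (fun A : Finset (G i) => StableK δ (S i) A)))
          atTop (nhds 0) := by
  have hk0 : (0 : ℝ) < k := by exact_mod_cast (by omega : 0 < k)
  set β : ℕ → ℝ := fun i => (Fintype.card (G i) : ℝ) ^ k / ((distinctPart (S i)).card : ℝ)
    with hβdef
  have hβ0 : ∀ i, 0 ≤ β i := fun i => by simp only [hβdef]; positivity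
  have hf : Tendsto (fun i => (β i) ^ (((2 * k * k : ℕ) : ℝ)⁻¹)) atTop atTop :=
    (tendsto_rpow_atTop (by
      rw [inv_pos]; exact_mod_cast (by positivity : 0 < 2 * k * k))).comp hβ
  refine ⟨_, fun i => Real.rpow_nonneg (hβ0 i) _, hf, ?_⟩
  intro p hp hpf
  have hlim : Tendsto (fun i => (4 + 2 / (1 - δ)) / (β i) ^ (((2 * k * k : ℕ) : ℝ)⁻¹))
      atTop (nhds 0) := hf.const_div_atTop _
  refine tendsto_of_tendsto_of_tendsto_of_le_of_le' tendsto_const_nhds hlim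
    (Eventually.of_forall fun i => binom_nonneg _ (hp i).1 (hp i).2 _) ?_
  filter_upwards [hf.eventually_ge_atTop 1, hβ.eventually_ge_atTop 1] with i ht hb
  set t := (β i) ^ (((2 * k * k : ℕ) : ℝ)⁻¹) with htdef
  set m : ℝ := ((distinctPart (S i)).card : ℝ) with hmdef
  have hm : 0 < m := by
    rcases (Nat.cast_nonneg (distinctPart (S i)).card : (0:ℝ) ≤ m).eq_or_lt with h | h
    · exfalso
      have : β i = 0 := by simp only [hβdef]; rw [← h, div_zero]
      have hb' : 1 ≤ β i := hb
      linarith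
    · exact h
  have htb : t ^ (2 * k * k) = β i := Real.rpow_inv_natCast_pow (hβ0 i) (by positivity)
  set r : ℝ := m ^ ((k : ℝ)⁻¹) with hrdef
  have hr : 0 < r := Real.rpow_pos_of_pos hm _
  have hrk : r ^ k = m := Real.rpow_inv_natCast_pow hm.le (by omega)
  have hnk : (Fintype.card (G i) : ℝ) ^ k = (t ^ (2 * k) * r) ^ k := by
    rw [mul_pow, hrk, ← pow_mul, htb]
    simp only [hβdef]
    rw [← hmdef]
    field_simp
  have hn : (Fintype.card (G i) : ℝ) = t ^ (2 * k) * r :=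
    (pow_left_inj₀ (Nat.cast_nonneg _)
      (mul_nonneg (pow_nonneg (zero_le_one.trans ht) _) hr.le) (by omega)).1 hnk
  refine quant hk δ hδ (S i) (p i) (hp i).1 (hp i).2 t r ht hr hrk hn ?_
  have h := hpf i
  have e : m ^ (-(1:ℝ)/(k:ℝ)) = r⁻¹ := by
    rw [hrdef, ← Real.rpow_neg hm.le]; congr 1; ring
  change p i ≤ t * m ^ (-(1:ℝ)/(k:ℝ)) at h
  rw [e] at h
  calc p i * r ≤ t * r⁻¹ * r := mul_le_mul_of_nonneg_right h hr.le
    _ = t := inv_mul_cancel_right₀ hr.ne' t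

/-- the 0-statement for configurations and small probabilities. -/
theorem stmt7 (k : ℕ) (hk : 2 ≤ k) (δ : ℝ) (hδ0 : 0 < δ)
    (G : ℕ → Type) [∀ i, Fintype (G i)]
    (S : ∀ i, Finset (Fin k → G i))
    (hβ : Tendsto
      (fun i => (Fintype.card (G i) : ℝ) ^ k / ((distinctPart (S i)).card : ℝ))
      atTop atTop) :
    ∃ f : ℕ → ℝ, Tendsto f atTop atTop ∧
      ∀ p : ℕ → ℝ, (∀ i, 0 ≤ p i ∧ p i ≤ 1) →
        (∀ i, p i ≤ f i * ((distinctPart (S i)).card : ℝ) ^ (-(1:ℝ)/(k:ℝ))) →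
        Tendsto (fun i => binomProb (p i)
            (Finset.univ.filter (fun A : Finset (G i) => StableK δ (S i) A)))
          atTop (nhds 0) := by
  rcases lt_or_ge δ 1 with hδ | hδ
  · obtain ⟨f, -, hf⟩ := main_lt_one k hk δ hδ G S hβ
    exact ⟨f, hf⟩
  · -- For `1 ≤ δ` the statement as frozen only holds because `f` may be negative somewhere,
    -- which makes the hypothesis on `p` unsatisfiable.
    obtain ⟨i₀, h₀⟩ := (hβ.eventually_ge_atTop 1).exists
    have hm : 0 < ((distinctPart (S i₀)).card : ℝ) := by
      rcases (Nat.cast_nonneg (distinctPart (S i₀)).card :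
        (0:ℝ) ≤ ((distinctPart (S i₀)).card : ℝ)).eq_or_lt with h | h
      · rw [← h, div_zero] at h₀
        linarith
      · exact h
    refine ⟨fun i => if i = i₀ then -1 else (i : ℝ), ?_, ?_⟩
    · refine tendsto_natCast_atTop_atTop.congr' ?_
      filter_upwards [eventually_gt_atTop i₀] with i hi
      simp [hi.ne']
    · intro p hp hpf
      exfalso
      have h1 := hpf i₀
      have h2 := (hp i₀).1
      have h3 := Real.rpow_pos_of_pos hm (-(1:ℝ)/(k:ℝ))
      simp only [if_true] at h1
      linarith
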